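/- Let N ≥ 1 and let m_1,…,m_N be real constants. Work in the polynomial ring ℝ[x_1,…,x_N], and let M be the N×N matrix over this ring with entries M_{j,i} = j · m_i · x_i^{j−1}, with cofactors A_{u,i}. Then for every u with 1 ≤ u ≤ N and every integer k ≥ 1, the polynomial ∑_{i=1}^N m_i x_i^{k−1} A_{u,i} is divisible in ℝ[x_1,…,x_N] by the Vandermonde product ∏_{1 ≤ q < p ≤ N} (x_q − x_p); equivalently, there is a polynomial h ∈ ℝ[x_1,…,x_N] with ∑_{i=1}^N m_i x_i^{k−1} A_{u,i} = h · ∏_{q < p} (x_q − x_p). -/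

import Mathlib

/-- The `(u,i)` cofactor of an `N × N` matrix over a commutative ring
(`N = N' + 1`): `(−1)^{u+i}` times the determinant of the matrix obtained by
deleting row `u` and column `i`. -/
noncomputable def cofactor {R : Type*} [CommRing R] {N' : ℕ}
    (M : Matrix (Fin (N' + 1)) (Fin (N' + 1)) R) (u i : Fin (N' + 1)) : R :=
  (-1 : R) ^ ((u : ℕ) + (i : ℕ)) * (M.submatrix u.succAbove i.succAbove).det

open MvPolynomial

/-- Powers of finitely many elements are common combinations of the first powers. -/
theorem exists_pow_coeff {R : Type*} [CommRing R] [Nontrivial R] {n : ℕ} (x : Fin n → R) (e : ℕ) :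
    ∃ c : Fin n → R, ∀ i, x i ^ e = ∑ j : Fin n, c j * x i ^ (j : ℕ) := by
  classical
  let P : Polynomial R := ∏ i : Fin n, (Polynomial.X - Polynomial.C (x i))
  have hP : P.Monic := Polynomial.monic_prod_of_monic _ _ fun i _ => Polynomial.monic_X_sub_C _
  have hdeg : P.degree = n := by
    rw [Polynomial.degree_eq_natDegree hP.ne_zero]
    simp [P, Polynomial.natDegree_prod_of_monic, Polynomial.monic_X_sub_C]
  let Q : Polynomial R := (Polynomial.X ^ e) %ₘ P
  have hQ : Q.degree < n := hdeg ▸ Polynomial.degree_modByMonic_lt _ hP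
  refine ⟨fun j => Q.coeff j, fun i => ?_⟩
  have h0 : P.eval (x i) = 0 := by
    simp only [P, Polynomial.eval_prod]
    exact Finset.prod_eq_zero (Finset.mem_univ i) (by simp)
  have h1 := congrArg (Polynomial.eval (x i))
    (Polynomial.modByMonic_add_div (Polynomial.X ^ e : Polynomial R) P)
  simp only [Polynomial.eval_add, Polynomial.eval_mul, h0, zero_mul, add_zero,
    Polynomial.eval_pow, Polynomial.eval_X] at h1
  rw [← h1]
  change Q.eval (x i) = _
  have hQ2 : Q ∈ Polynomial.degreeLT R n := Polynomial.mem_degreeLT.2 hQ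
  rw [Polynomial.eval_eq_sum_degreeLTEquiv hQ2]
  rfl

/-- Let `N = N' + 1 ≥ 1`, let `m_1, …, m_N` be real constants and let `M` be the
`N × N` matrix over `ℝ[x_1, …, x_N]` with entries `M_{j,i} = j · m_i · x_i^{j−1}`
(indices `0`-based, so row `j : Fin N` is row `j+1`), with cofactors `A_{u,i}`.
Then for every `u` and every `k ≥ 1` the polynomial `∑_i m_i x_i^{k−1} A_{u,i}`
is divisible by the Vandermonde product `∏_{q<p} (x_q − x_p)`. -/
theorem vandermonde_divides_cofactor_sum (N' : ℕ) (m : Fin (N' + 1) → ℝ)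
    (M : Matrix (Fin (N' + 1)) (Fin (N' + 1)) (MvPolynomial (Fin (N' + 1)) ℝ))
    (hM : ∀ j i, M j i =
      C (((j : ℕ) + 1 : ℕ) : ℝ) * C (m i) * (X i) ^ (j : ℕ))
    (u : Fin (N' + 1)) (k : ℕ) (hk : 1 ≤ k) :
    (∏ q : Fin (N' + 1), ∏ p ∈ Finset.Ioi q, (X q - X p)) ∣
      ∑ i : Fin (N' + 1), C (m i) * (X i) ^ (k - 1) * cofactor M u i := by
  obtain ⟨c, hc⟩ := exists_pow_coeff
    (fun i : Fin (N' + 1) => (X i : MvPolynomial (Fin (N' + 1)) ℝ)) (k - 1)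
  have h1 : ∑ i : Fin (N' + 1), C (m i) * (X i) ^ (k - 1) * cofactor M u i
      = (M.updateRow u (fun i => C (m i) * (X i) ^ (k - 1))).det := by
    rw [Matrix.det_succ_row _ u]
    refine Finset.sum_congr rfl fun i _ => ?_
    rw [Matrix.submatrix_updateRow_succAbove, Matrix.updateRow_self, cofactor]
    ring
  have h2 : M.updateRow u (fun i => C (m i) * (X i) ^ (k - 1)) =
      (Matrix.diagonal fun j : Fin (N' + 1) => (C (((j : ℕ) + 1 : ℕ) : ℝ) :
        MvPolynomial (Fin (N' + 1)) ℝ)).updateRow u c *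
      (Matrix.vandermonde (fun i : Fin (N' + 1) =>
        (X i : MvPolynomial (Fin (N' + 1)) ℝ))).transpose *
      Matrix.diagonal (fun i => C (m i)) := by
    ext1 j i
    rw [Matrix.mul_diagonal]
    by_cases hj : j = u
    · subst hj
      simp only [Matrix.updateRow_self, Matrix.mul_apply, Matrix.transpose_apply,
        Matrix.vandermonde_apply]
      rw [hc i, mul_comm]
    · simp only [Matrix.updateRow_ne hj, Matrix.mul_apply, Matrix.transpose_apply,
        Matrix.vandermonde_apply, Matrix.diagonal_apply, hM]
      simp only [ite_mul, zero_mul, Finset.sum_ite_eq, Finset.mem_univ, if_true]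
      ring
  have h3 : (∏ q : Fin (N' + 1), ∏ p ∈ Finset.Ioi q,
      (X q - X p : MvPolynomial (Fin (N' + 1)) ℝ)) ∣
      (Matrix.vandermonde (fun i : Fin (N' + 1) =>
        (X i : MvPolynomial (Fin (N' + 1)) ℝ))).det := by
    rw [Matrix.det_vandermonde]
    refine Finset.prod_dvd_prod_of_dvd _ _ fun q _ =>
      Finset.prod_dvd_prod_of_dvd _ _ fun p _ => ?_
    exact ⟨-1, by ring⟩
  rw [h1, h2, Matrix.det_mul, Matrix.det_mul, Matrix.det_transpose]
  exact (h3.mul_left _).mul_right _
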